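/- There exists a constant C>0 such that, for all b>0 and all r≥1, e_N(b,r)/r² ≥ g(b) − C √b / r. -/

import Mathlib

open MeasureTheory Real Set Filter Topology

noncomputable section

/-- The open square `Q_r = (-r/2, r/2) × (-r/2, r/2)`. -/
def Qsq (r : ℝ) : Set (ℝ × ℝ) := Ioo (-r/2) (r/2) ×ˢ Ioo (-r/2) (r/2)

/-- The vertical strip `S_R = (-R/2, R/2) × ℝ`. -/
def Strip (R : ℝ) : Set (ℝ × ℝ) := Ioo (-R/2) (R/2) ×ˢ (univ : Set ℝ)

/-- The magnetic potential `A₀(x) = (-x₂/2, x₁/2)` of the constant unit magnetic field. -/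
def A₀ (x : ℝ × ℝ) : ℝ × ℝ := (-x.2 / 2, x.1 / 2)

/-- The magnetic potential `A_van(x) = (-x₂²/2, 0)` generating the field `B(x) = x₂`. -/
def Avan (x : ℝ × ℝ) : ℝ × ℝ := (-x.2 ^ 2 / 2, 0)

/-- The magnetic gradient energy density `|(∇ - iA)u|²` at `x`. -/
def magGradSq (A : ℝ × ℝ → ℝ × ℝ) (u : ℝ × ℝ → ℂ) (x : ℝ × ℝ) : ℝ :=
  ‖fderiv ℝ u x (1, 0) - Complex.I * ((A x).1 : ℂ) * u x‖ ^ 2 +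
  ‖fderiv ℝ u x (0, 1) - Complex.I * ((A x).2 : ℂ) * u x‖ ^ 2

/-- The Ginzburg–Landau functional `F_{b,Q_r}` on the square `Q_r`. -/
def Fsq (b r : ℝ) (u : ℝ × ℝ → ℂ) : ℝ :=
  ∫ x in Qsq r, (b * magGradSq A₀ u x - ‖u x‖ ^ 2 + ‖u x‖ ^ 4 / 2)

/-- (Smooth surrogate of) membership in `H¹(Q_r; ℂ)`. -/
def MemH1sq (u : ℝ × ℝ → ℂ) : Prop := ContDiff ℝ 1 u

/-- (Smooth surrogate of) membership in `H¹₀(Q_r; ℂ)`: vanishing on the boundary. -/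
def MemH10sq (r : ℝ) (u : ℝ × ℝ → ℂ) : Prop :=
  ContDiff ℝ 1 u ∧ ∀ x ∈ frontier (Qsq r), u x = 0

/-- The Dirichlet ground-state energy `e_D(b, r)`. -/
def eD (b r : ℝ) : ℝ := sInf (Fsq b r '' {u | MemH10sq r u})

/-- The Neumann ground-state energy `e_N(b, r)`. -/
def eN (b r : ℝ) : ℝ := sInf (Fsq b r '' {u | MemH1sq u})

/-- The energy density of the strip functional `𝓔_{L,R}` at `x`. -/
def stripDensity (L : ℝ) (u : ℝ × ℝ → ℂ) (x : ℝ × ℝ) : ℝ :=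
  magGradSq Avan u x - L ^ (-(2:ℝ)/3) * ‖u x‖ ^ 2 + (L ^ (-(2:ℝ)/3) / 2) * ‖u x‖ ^ 4

/-- The strip functional `𝓔_{L,R}`. -/
def Estrip (L R : ℝ) (u : ℝ × ℝ → ℂ) : ℝ := ∫ x in Strip R, stripDensity L u x

/-- (Surrogate of) membership in the space `H¹_{mag,0}(S_R)`. -/
def MemH1mag0 (R : ℝ) (u : ℝ × ℝ → ℂ) : Prop :=
  ContDiff ℝ 1 u ∧
  IntegrableOn (fun x => ‖u x‖ ^ 2) (Strip R) ∧
  IntegrableOn (magGradSq Avan u) (Strip R) ∧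
  IntegrableOn (fun x => ‖u x‖ ^ 4) (Strip R) ∧
  ∀ x ∈ frontier (Strip R), u x = 0

/-- The ground-state energy `e_gs(L; R)` of the strip functional. -/
def egs (L R : ℝ) : ℝ := sInf (Estrip L R '' {u | MemH1mag0 R u})

/-- `g : (0,∞) → ℝ` is the thermodynamic limit of the Dirichlet square energies. -/
def IsLimitG (g : ℝ → ℝ) : Prop :=
  ∀ b > 0, Tendsto (fun r => eD b r / r ^ 2) atTop (nhds (g b))

/-- `E : (0,∞) → ℝ` is the large-`R` limit of the strip energies. -/
def IsLimitE (E : ℝ → ℝ) : Prop :=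
  ∀ L > 0, Tendsto (fun R => egs L R / R) atTop (nhds (E L))

/-- The energy density. -/
def densH (b : ℝ) (u : ℝ × ℝ → ℂ) (x : ℝ × ℝ) : ℝ :=
  b * magGradSq A₀ u x - ‖u x‖ ^ 2 + ‖u x‖ ^ 4 / 2

lemma densH_cont (b : ℝ) {u : ℝ × ℝ → ℂ} (hu : ContDiff ℝ 1 u) : Continuous (densH b u) := by
  have h1 : Continuous (fun x => fderiv ℝ u x (1, 0)) :=
    (hu.continuous_fderiv one_ne_zero).clm_apply continuous_const
  have h2 : Continuous (fun x => fderiv ℝ u x (0, 1)) :=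
    (hu.continuous_fderiv one_ne_zero).clm_apply continuous_const
  have h0 := hu.continuous
  unfold densH magGradSq A₀
  fun_prop

lemma Qsq_meas (r : ℝ) : MeasurableSet (Qsq r) := measurableSet_Ioo.prod measurableSet_Ioo

lemma cont_intOn {f : ℝ × ℝ → ℝ} (hf : Continuous f) (r : ℝ) : IntegrableOn f (Qsq r) := by
  have : IsCompact (Icc (-r/2) (r/2) ×ˢ Icc (-r/2) (r/2)) := isCompact_Icc.prod isCompact_Icc
  exact (hf.continuousOn.integrableOn_compact this).mono_set
    (prod_mono Ioo_subset_Icc_self Ioo_subset_Icc_self)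

lemma vol_rect (a c d e : ℝ) (h1 : a ≤ c) (h2 : d ≤ e) :
    volume.real (Ioo a c ×ˢ Ioo d e) = (c - a) * (e - d) := by
  rw [Measure.volume_eq_prod, measureReal_prod_prod, Real.volume_real_Ioo_of_le h1,
    Real.volume_real_Ioo_of_le h2]

lemma Fsq_lower {b r : ℝ} (hb : 0 < b) (hr : 0 < r) {u : ℝ × ℝ → ℂ} (hu : ContDiff ℝ 1 u) :
    -(r ^ 2) / 2 ≤ Fsq b r u := by
  have h : ∫ x in Qsq r, (-(1:ℝ)/2) ≤ ∫ x in Qsq r, densH b u x := by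
    apply setIntegral_mono (cont_intOn continuous_const r) (cont_intOn (densH_cont b hu) r)
    intro x
    have : 0 ≤ magGradSq A₀ u x := by unfold magGradSq; positivity
    have := mul_nonneg hb.le this
    simp only [densH]
    nlinarith [sq_nonneg (‖u x‖ ^ 2 - 1)]
  have h2 : ∫ x in Qsq r, (-(1:ℝ)/2) = -(r ^ 2) / 2 := by
    rw [setIntegral_const, Qsq, vol_rect _ _ _ _ (by linarith) (by linarith), smul_eq_mul]
    ring
  rw [h2] at h
  exact h

/-- magnetic translation -/
def mtr (v : ℝ × ℝ → ℂ) (c : ℝ × ℝ) (x : ℝ × ℝ) : ℂ :=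
  Complex.exp (((-c.2 / 2 * x.1 + c.1 / 2 * x.2 : ℝ) : ℂ) * Complex.I) * v (x - c)

lemma mtr_contDiff {v : ℝ × ℝ → ℂ} (hv : ContDiff ℝ 1 v) (c : ℝ × ℝ) :
    ContDiff ℝ 1 (mtr v c) := by
  have h1 : ContDiff ℝ 1 (fun x : ℝ × ℝ => ((-c.2 / 2 * x.1 + c.1 / 2 * x.2 : ℝ) : ℂ)) :=
    Complex.ofRealCLM.contDiff.comp
      (by fun_prop : ContDiff ℝ 1 (fun x : ℝ × ℝ => -c.2 / 2 * x.1 + c.1 / 2 * x.2))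
  have h2 : ContDiff ℝ 1 (fun x : ℝ × ℝ => v (x - c)) := hv.comp (by fun_prop)
  exact ((h1.mul contDiff_const).cexp).mul h2

lemma mtr_hasFDeriv {v : ℝ × ℝ → ℂ} (hv : ContDiff ℝ 1 v) (c x e : ℝ × ℝ) :
    fderiv ℝ (mtr v c) x e =
      Complex.exp (((-c.2 / 2 * x.1 + c.1 / 2 * x.2 : ℝ) : ℂ) * Complex.I) *
       (fderiv ℝ v (x - c) e
        + Complex.I * ((-c.2 / 2 * e.1 + c.1 / 2 * e.2 : ℝ) : ℂ) * v (x - c)) := by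
  let L : (ℝ × ℝ) →L[ℝ] ℝ := (-c.2 / 2) • ContinuousLinearMap.fst ℝ ℝ ℝ +
    (c.1 / 2) • ContinuousLinearMap.snd ℝ ℝ ℝ
  have hL : HasFDerivAt (fun x : ℝ × ℝ => ((L x : ℝ) : ℂ)) (Complex.ofRealCLM.comp L) x :=
    (Complex.ofRealCLM.comp L).hasFDerivAt
  have h1 := (hL.mul_const Complex.I).cexp
  have h2 : HasFDerivAt (fun x : ℝ × ℝ => v (x - c)) (fderiv ℝ v (x - c)) x := by
    have := ((hv.differentiable one_ne_zero) (x - c)).hasFDerivAt.comp x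
      ((hasFDerivAt_id x).sub_const c)
    rw [ContinuousLinearMap.comp_id] at this
    exact this
  have h3 := h1.mul h2
  have h4 : mtr v c = fun x => Complex.exp (((L x : ℝ) : ℂ) * Complex.I) * v (x - c) := by
    funext y; simp [mtr, L]
  have h6 : mtr v c = (fun x => Complex.exp (((L x : ℝ) : ℂ) * Complex.I)) *
    (fun x => v (x - c)) := h4
  rw [h6, h3.fderiv]
  simp [L]
  ring

lemma norm_mtr (v : ℝ × ℝ → ℂ) (c x : ℝ × ℝ) : ‖mtr v c x‖ = ‖v (x - c)‖ := by
  rw [mtr, norm_mul, Complex.norm_exp_ofReal_mul_I, one_mul]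

lemma magGrad_mtr {v : ℝ × ℝ → ℂ} (hv : ContDiff ℝ 1 v) (c x : ℝ × ℝ) :
    magGradSq A₀ (mtr v c) x = magGradSq A₀ v (x - c) := by
  unfold magGradSq
  rw [mtr_hasFDeriv hv, mtr_hasFDeriv hv]
  set E := Complex.exp (((-c.2 / 2 * x.1 + c.1 / 2 * x.2 : ℝ) : ℂ) * Complex.I) with hE
  have hn : ‖E‖ = 1 := Complex.norm_exp_ofReal_mul_I _
  have e1 : ∀ z w : ℂ, z = E * w → ‖z‖ = ‖w‖ := by
    intro z w h; rw [h, norm_mul, hn, one_mul]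
  congr 2
  · apply e1
    rw [mtr, ← hE]
    simp [A₀]; ring
  · apply e1
    rw [mtr, ← hE]
    simp [A₀]; ring

lemma dens_mtr (b : ℝ) {v : ℝ × ℝ → ℂ} (hv : ContDiff ℝ 1 v) (c x : ℝ × ℝ) :
    densH b (mtr v c) x = densH b v (x - c) := by
  unfold densH; rw [magGrad_mtr hv, norm_mtr]

lemma dens_zero {b : ℝ} {v : ℝ × ℝ → ℂ} {x : ℝ × ℝ} (h0 : v x = 0) (h1 : fderiv ℝ v x = 0) :
    densH b v x = 0 := by
  simp [densH, magGradSq, h0, h1]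

lemma mtr_zero {v : ℝ × ℝ → ℂ} (hv : ContDiff ℝ 1 v) {c x : ℝ × ℝ} (h0 : v (x - c) = 0)
    (h1 : fderiv ℝ v (x - c) = 0) : mtr v c x = 0 ∧ fderiv ℝ (mtr v c) x = 0 := by
  constructor
  · simp [mtr, h0]
  · apply ContinuousLinearMap.ext
    intro e
    rw [mtr_hasFDeriv hv, h0, h1]; simp

lemma dens_congr {b : ℝ} {v w : ℝ × ℝ → ℂ} {x : ℝ × ℝ} (h0 : v x = w x)
    (h1 : fderiv ℝ v x = fderiv ℝ w x) : densH b v x = densH b w x := by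
  simp [densH, magGradSq, h0, h1]

/-- Pointwise additivity when at most one member is nonzero. -/
lemma dens_sum {ι : Type*} (s : Finset ι) (b : ℝ) (f : ι → ℝ × ℝ → ℂ)
    (hf : ∀ i, ContDiff ℝ 1 (f i)) (x : ℝ × ℝ)
    (h : ∀ i ∈ s, ∀ j ∈ s, i ≠ j → (f i x = 0 ∧ fderiv ℝ (f i) x = 0) ∨
      (f j x = 0 ∧ fderiv ℝ (f j) x = 0)) :
    densH b (fun y => ∑ i ∈ s, f i y) x = ∑ i ∈ s, densH b (f i) x := by
  have hd : fderiv ℝ (fun y => ∑ i ∈ s, f i y) x = ∑ i ∈ s, fderiv ℝ (f i) x :=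
    fderiv_fun_sum (fun i _ => (hf i).differentiable one_ne_zero x)
  by_cases hall : ∀ i ∈ s, f i x = 0 ∧ fderiv ℝ (f i) x = 0
  · rw [dens_zero (Finset.sum_eq_zero fun i hi => (hall i hi).1)
      (hd.trans (Finset.sum_eq_zero fun i hi => (hall i hi).2))]
    exact (Finset.sum_eq_zero fun i hi => dens_zero (hall i hi).1 (hall i hi).2).symm
  · push Not at hall
    obtain ⟨i, hi, hne⟩ := hall
    have ho : ∀ j ∈ s, j ≠ i → f j x = 0 ∧ fderiv ℝ (f j) x = 0 := by
      intro j hj hji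
      rcases h i hi j hj hji.symm with h' | h'
      · exact absurd h'.2 (hne h'.1)
      · exact h'
    rw [Finset.sum_eq_single_of_mem i hi (fun j hj hji => dens_zero (ho j hj hji).1 (ho j hj hji).2)]
    apply dens_congr
    · exact Finset.sum_eq_single_of_mem i hi (fun j hj hji => (ho j hj hji).1)
    · rw [hd]
      exact Finset.sum_eq_single_of_mem i hi (fun j hj hji => (ho j hj hji).2)

/-- centers of the tiles -/
def ctr (r : ℝ) (N : ℕ) (j : ℕ × ℕ) : ℝ × ℝ :=
  (-(N * r) / 2 + r / 2 + j.1 * r, -(N * r) / 2 + r / 2 + j.2 * r)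

lemma ctr_sep {r : ℝ} (hr : 0 < r) (N : ℕ) {i j : ℕ × ℕ} (hij : i ≠ j) (x : ℝ × ℝ)
    (hi : x - ctr r N i ∈ Qsq r) (hj : x - ctr r N j ∈ Qsq r) : False := by
  have key : ∀ (m n : ℕ) (t : ℝ), -r/2 < t - m * r → t - m * r < r/2 → -r/2 < t - n * r →
      t - n * r < r/2 → m = n := by
    have aux : ∀ (m n : ℕ) (t : ℝ), t - m * r < r/2 → -r/2 < t - n * r → n ≤ m := by
      intro m n t h1 h2
      by_contra hlt
      have : (m:ℝ) + 1 ≤ n := by exact_mod_cast not_le.mp hlt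
      nlinarith
    intro m n t h1 h2 h3 h4
    exact le_antisymm (aux n m t h4 h1) (aux m n t h2 h3)
  simp only [Qsq, ctr, mem_prod, mem_Ioo, Prod.fst_sub, Prod.snd_sub] at hi hj
  apply hij
  ext
  · exact key _ _ (x.1 - (-(N * r) / 2 + r / 2)) (by linarith) (by linarith) (by linarith)
      (by linarith)
  · exact key _ _ (x.2 - (-(N * r) / 2 + r / 2)) (by linarith) (by linarith) (by linarith)
      (by linarith)

lemma ctr_sub {r : ℝ} (hr : 0 < r) {N : ℕ} {i : ℕ × ℕ}
    (hi : i ∈ Finset.range N ×ˢ Finset.range N) (x : ℝ × ℝ)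
    (hx : x - ctr r N i ∈ Qsq r) : x ∈ Qsq (N * r) := by
  simp only [Finset.mem_product, Finset.mem_range] at hi
  have h1 : (i.1:ℝ) + 1 ≤ N := by exact_mod_cast hi.1
  have h2 : (i.2:ℝ) + 1 ≤ N := by exact_mod_cast hi.2
  have h3 : (0:ℝ) ≤ i.1 := Nat.cast_nonneg _
  have h4 : (0:ℝ) ≤ i.2 := Nat.cast_nonneg _
  simp only [Qsq, ctr, mem_prod, mem_Ioo, Prod.fst_sub, Prod.snd_sub] at hx ⊢
  obtain ⟨⟨a1, a2⟩, a3, a4⟩ := hx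
  refine ⟨⟨?_, ?_⟩, ?_, ?_⟩ <;> nlinarith

lemma tiling {b r : ℝ} (hb : 0 < b) (hr : 0 < r) {v : ℝ × ℝ → ℂ} (hv : ContDiff ℝ 1 v)
    (h0 : ∀ x, x ∉ Qsq r → v x = 0 ∧ fderiv ℝ v x = 0) (N : ℕ) (hN : 0 < N) :
    eD b (N * r) ≤ N ^ 2 * Fsq b r v := by
  set s := Finset.range N ×ˢ Finset.range N with hs
  set V : ℝ × ℝ → ℂ := fun y => ∑ i ∈ s, mtr v (ctr r N i) y with hV
  have hNr : 0 < N * r := by positivity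
  have hVc : ContDiff ℝ 1 V := ContDiff.sum fun i _ => mtr_contDiff hv _
  have hF : Fsq b (N * r) V = N ^ 2 * Fsq b r v := by
    have e1 : ∀ x, densH b V x = ∑ i ∈ s, densH b v (x - ctr r N i) := by
      intro x
      rw [hV, dens_sum s b _ (fun i => mtr_contDiff hv _) x]
      · exact Finset.sum_congr rfl fun i _ => dens_mtr b hv _ _
      · intro i _ j _ hij
        by_cases hi : x - ctr r N i ∈ Qsq r
        · right
          have hj : x - ctr r N j ∉ Qsq r := fun hj => ctr_sep hr N hij x hi hj
          exact mtr_zero hv (h0 _ hj).1 (h0 _ hj).2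
        · left
          exact mtr_zero hv (h0 _ hi).1 (h0 _ hi).2
    have e2 : ∀ i ∈ s, ∫ x in Qsq (N * r), densH b v (x - ctr r N i) = Fsq b r v := by
      intro i hi
      rw [setIntegral_eq_integral_of_forall_compl_eq_zero]
      · rw [integral_sub_right_eq_self (densH b v)]
        rw [← setIntegral_eq_integral_of_forall_compl_eq_zero (s := Qsq r)]
        · rfl
        · intro x hx
          exact dens_zero (h0 x hx).1 (h0 x hx).2
      · intro x hx
        have : x - ctr r N i ∉ Qsq r := fun h => hx (ctr_sub hr hi x h)
        exact dens_zero (h0 _ this).1 (h0 _ this).2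
    have e3 : Fsq b (N * r) V = ∫ x in Qsq (N * r), densH b V x := rfl
    rw [e3]
    simp_rw [e1]
    rw [integral_finsetSum]
    · rw [Finset.sum_congr rfl e2]
      rw [Finset.sum_const, nsmul_eq_mul, hs, Finset.card_product, Finset.card_range]
      push_cast; ring
    · intro i _
      exact cont_intOn ((densH_cont b hv).comp (continuous_id.sub continuous_const)) _
  rw [← hF]
  apply csInf_le
  · refine ⟨-((N * r) ^ 2) / 2, ?_⟩
    rintro _ ⟨u, hu, rfl⟩
    exact Fsq_lower hb hNr hu.1
  · refine ⟨V, ⟨hVc, ?_⟩, rfl⟩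
    intro x hx
    have hx' : x ∉ Qsq (N * r) := by
      have ho : IsOpen (Qsq (N * r)) := isOpen_Ioo.prod isOpen_Ioo
      rw [ho.frontier_eq] at hx
      exact hx.2
    apply Finset.sum_eq_zero
    intro i hi
    have : x - ctr r N i ∉ Qsq r := fun h => hx' (ctr_sub hr hi x h)
    exact (mtr_zero hv (h0 _ this).1 (h0 _ this).2).1

lemma g_le {g : ℝ → ℝ} (hg : IsLimitG g) {b r : ℝ} (hb : 0 < b) (hr : 0 < r)
    {v : ℝ × ℝ → ℂ} (hv : ContDiff ℝ 1 v)
    (h0 : ∀ x, x ∉ Qsq r → v x = 0 ∧ fderiv ℝ v x = 0) : g b ≤ Fsq b r v / r ^ 2 := by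
  have ht : Tendsto (fun N : ℕ => (N : ℝ) * r) atTop atTop :=
    tendsto_natCast_atTop_atTop.atTop_mul_const hr
  refine le_of_tendsto ((hg b hb).comp ht) ?_
  filter_upwards [eventually_gt_atTop 0] with N hN
  have h := tiling hb hr hv h0 N hN
  have hN' : (0:ℝ) < N := by exact_mod_cast hN
  simp only [Function.comp]
  rw [div_le_div_iff₀ (by positivity) (by positivity)]
  calc eD b (N * r) * r ^ 2 ≤ (N ^ 2 * Fsq b r v) * r ^ 2 := by gcongr
    _ = _ := by ring

lemma ST_bound : ∃ K : ℝ, 0 < K ∧ ∀ t, |deriv Real.smoothTransition t| ≤ K := by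
  have hc : Continuous (deriv Real.smoothTransition) :=
    (Real.smoothTransition.contDiff (n := 1)).continuous_deriv le_rfl
  obtain ⟨K, hK⟩ := (isCompact_Icc (a := (0:ℝ)) (b := 1)).exists_bound_of_continuousOn
    hc.continuousOn
  refine ⟨max K 1, by positivity, fun t => ?_⟩
  rcases le_total t 0 with h | h
  · have : IsLocalMin Real.smoothTransition t := by
      refine Eventually.of_forall fun y => ?_
      rw [Real.smoothTransition.zero_of_nonpos h]; exact Real.smoothTransition.nonneg y
    rw [this.deriv_eq_zero]; simp
  rcases le_total 1 t with h1 | h1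
  · have : IsLocalMax Real.smoothTransition t := by
      refine Eventually.of_forall fun y => ?_
      rw [Real.smoothTransition.one_of_one_le h1]; exact Real.smoothTransition.le_one y
    rw [this.deriv_eq_zero]; simp
  · exact (hK t ⟨h, h1⟩).trans (le_max_left _ _)

/-- one-dimensional plateau -/
def hpl (r l t : ℝ) : ℝ :=
  Real.smoothTransition ((r/2 - t) / l) * Real.smoothTransition ((r/2 + t) / l)

lemma hpl_nonneg (r l t : ℝ) : 0 ≤ hpl r l t :=
  mul_nonneg (Real.smoothTransition.nonneg _) (Real.smoothTransition.nonneg _)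

lemma hpl_le_one (r l t : ℝ) : hpl r l t ≤ 1 :=
  mul_le_one₀ (Real.smoothTransition.le_one _) (Real.smoothTransition.nonneg _)
    (Real.smoothTransition.le_one _)

lemma hpl_contDiff (r l : ℝ) : ContDiff ℝ 1 (hpl r l) := by
  have h : ContDiff ℝ 1 Real.smoothTransition := Real.smoothTransition.contDiff
  exact (h.comp (by fun_prop : ContDiff ℝ 1 fun t : ℝ => (r/2 - t) / l)).mul
    (h.comp (by fun_prop : ContDiff ℝ 1 fun t : ℝ => (r/2 + t) / l))

lemma hpl_zero {r l t : ℝ} (hl : 0 < l) (ht : t ∉ Ioo (-r/2) (r/2)) : hpl r l t = 0 := by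
  rw [mem_Ioo, not_and_or, not_lt, not_lt] at ht
  unfold hpl
  rcases ht with h | h
  · rw [Real.smoothTransition.zero_of_nonpos (x := (r/2 + t) / l), mul_zero]
    exact div_nonpos_of_nonpos_of_nonneg (by linarith) hl.le
  · rw [Real.smoothTransition.zero_of_nonpos (x := (r/2 - t) / l), zero_mul]
    exact div_nonpos_of_nonpos_of_nonneg (by linarith) hl.le

lemma hpl_one {r l t : ℝ} (hl : 0 < l) (h1 : -r/2 + l ≤ t) (h2 : t ≤ r/2 - l) :
    hpl r l t = 1 := by
  unfold hpl
  rw [Real.smoothTransition.one_of_one_le, Real.smoothTransition.one_of_one_le, one_mul]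
  · rw [le_div_iff₀ hl]; linarith
  · rw [le_div_iff₀ hl]; linarith

lemma hpl_deriv {K r l : ℝ} (hl : 0 < l)
    (hK : ∀ t, |deriv Real.smoothTransition t| ≤ K) (t : ℝ) :
    |deriv (hpl r l) t| ≤ 2 * K / l := by
  have hd : Differentiable ℝ Real.smoothTransition :=
    (Real.smoothTransition.contDiff (n := 1)).differentiable one_ne_zero
  have a1 : HasDerivAt (fun t : ℝ => (r/2 - t) / l) (-1 / l) t := by
    simpa using ((hasDerivAt_id t).const_sub (r/2)).div_const l
  have a2 : HasDerivAt (fun t : ℝ => (r/2 + t) / l) (1 / l) t := by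
    simpa using ((hasDerivAt_id t).const_add (r/2)).div_const l
  have b1 := (hd ((r/2 - t) / l)).hasDerivAt.comp t a1
  have b2 := (hd ((r/2 + t) / l)).hasDerivAt.comp t a2
  have e : deriv (hpl r l) t = _ := (b1.mul b2).deriv
  rw [e]
  have k1 := hK ((r/2 - t) / l)
  have k2 := hK ((r/2 + t) / l)
  have n1 := Real.smoothTransition.nonneg ((r/2 - t) / l)
  have n2 := Real.smoothTransition.nonneg ((r/2 + t) / l)
  have m1 := Real.smoothTransition.le_one ((r/2 - t) / l)
  have m2 := Real.smoothTransition.le_one ((r/2 + t) / l)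
  have hK0 : 0 ≤ K := (abs_nonneg _).trans k1
  simp only [Function.comp]
  refine (abs_add_le _ _).trans ?_
  have hll : |(-1) / l| = 1 / l := by rw [abs_div, abs_neg, abs_one, abs_of_pos hl]
  have hll2 : |1 / l| = 1 / l := by rw [abs_div, abs_one, abs_of_pos hl]
  rw [abs_mul, abs_mul, abs_mul, abs_mul, hll, hll2, abs_of_nonneg n1, abs_of_nonneg n2]
  have hl' : 0 < 1 / l := by positivity
  calc _ ≤ K * (1 / l) * 1 + 1 * (K * (1 / l)) := by gcongr
    _ = _ := by ring

/-- pointwise vector inequality -/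
lemma vec_ineq (p u : ℂ) (ρ d κ : ℝ) (h0 : 0 ≤ ρ) (h1 : ρ ≤ 1) (hd : |d| ≤ κ) :
    ‖((1 - ρ ^ 4 : ℝ) : ℂ) * p + ((-(4 * ρ ^ 3 * d) : ℝ) : ℂ) * u‖ ^ 2
      ≤ ‖p‖ ^ 2 + 32 * κ ^ 2 * ρ ^ 2 * ‖u‖ ^ 2 := by
  have hκ : 0 ≤ κ := (abs_nonneg _).trans hd
  have h4 : ρ ^ 4 ≤ 1 := pow_le_one₀ h0 h1
  have h40 : 0 ≤ ρ ^ 4 := by positivity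
  have hn : ‖((1 - ρ ^ 4 : ℝ) : ℂ) * p + ((-(4 * ρ ^ 3 * d) : ℝ) : ℂ) * u‖
      ≤ (1 - ρ ^ 4) * ‖p‖ + 4 * ρ ^ 3 * κ * ‖u‖ := by
    refine (norm_add_le _ _).trans ?_
    rw [norm_mul, norm_mul, Complex.norm_real, Complex.norm_real, Real.norm_eq_abs,
      Real.norm_eq_abs, abs_neg, abs_mul, abs_of_nonneg (by linarith : 0 ≤ 1 - ρ ^ 4),
      abs_of_nonneg (by positivity : 0 ≤ 4 * ρ ^ 3)]
    gcongr
  refine (pow_le_pow_left₀ (norm_nonneg _) hn 2).trans ?_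
  set P := ‖p‖
  set U := κ * ‖u‖ with hU
  have hP : 0 ≤ P := norm_nonneg _
  have hU0 : 0 ≤ U := by positivity
  have e : 32 * κ ^ 2 * ρ ^ 2 * ‖u‖ ^ 2 = 32 * ρ ^ 2 * U ^ 2 := by rw [hU]; ring
  have e2 : 4 * ρ ^ 3 * κ * ‖u‖ = 4 * ρ ^ 3 * U := by rw [hU]; ring
  rw [e, e2]
  have c1 : 2 * ((1 - ρ ^ 4) * P) * (4 * ρ ^ 3 * U) ≤ ρ ^ 4 * P ^ 2 + 16 * ρ ^ 2 * U ^ 2 := by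
    have q1 : 2 * ((1 - ρ ^ 4) * P) * (4 * ρ ^ 3 * U) ≤ 8 * ρ ^ 3 * P * U := by
      have : 0 ≤ ρ ^ 4 * (8 * ρ ^ 3 * P * U) := by positivity
      nlinarith
    nlinarith [sq_nonneg (ρ ^ 2 * P - 4 * ρ * U)]
  have c2 : (4 * ρ ^ 3 * U) ^ 2 ≤ 16 * ρ ^ 2 * U ^ 2 := by
    have : 0 ≤ (1 - ρ ^ 4) * (16 * ρ ^ 2 * U ^ 2) := mul_nonneg (by linarith) (by positivity)
    nlinarith
  have c3 : ((1 - ρ ^ 4) * P) ^ 2 ≤ (1 - ρ ^ 4) * P ^ 2 := by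
    have : 0 ≤ ρ ^ 4 * ((1 - ρ ^ 4) * P ^ 2) :=
      mul_nonneg h40 (mul_nonneg (by linarith) (by positivity))
    nlinarith
  nlinarith

lemma scal_ineq (ρ y M : ℝ) (h0 : 0 ≤ ρ) (h1 : ρ ≤ 1) (hy : 0 ≤ y) :
    M * ρ ^ 2 * y - (1 - ρ ^ 4) ^ 2 * y + (1 - ρ ^ 4) ^ 4 * y ^ 2 / 2
      ≤ - y + y ^ 2 / 2 + (M + 2) ^ 2 / 2 := by
  have h4 : ρ ^ 4 ≤ 1 := pow_le_one₀ h0 h1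
  have h40 : 0 ≤ ρ ^ 4 := by positivity
  have h2 : ρ ^ 2 ≤ 1 := pow_le_one₀ h0 h1
  have a1 : (1 - (1 - ρ ^ 4) ^ 2) * y ≤ 2 * ρ ^ 2 * y := by
    gcongr
    nlinarith [sq_nonneg (ρ ^ 4), mul_nonneg (sq_nonneg ρ) (sub_nonneg.2 h2)]
  have a2 : (1 - ρ ^ 4) ^ 4 * y ^ 2 ≤ (1 - ρ ^ 4) * y ^ 2 := by
    gcongr
    exact pow_le_of_le_one (by linarith) (by linarith) (by norm_num)
  nlinarith [sq_nonneg (ρ ^ 2 * y - (M + 2))]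

/-- the function `ρ` -/
def rh (r l : ℝ) (x : ℝ × ℝ) : ℝ := 1 - hpl r l x.1 * hpl r l x.2

lemma rh_nonneg (r l : ℝ) (x : ℝ × ℝ) : 0 ≤ rh r l x := by
  have := mul_le_one₀ (hpl_le_one r l x.1) (hpl_nonneg r l x.2) (hpl_le_one r l x.2)
  unfold rh; linarith

lemma rh_le_one (r l : ℝ) (x : ℝ × ℝ) : rh r l x ≤ 1 := by
  have := mul_nonneg (hpl_nonneg r l x.1) (hpl_nonneg r l x.2)
  unfold rh; linarith

lemma rh_contDiff (r l : ℝ) : ContDiff ℝ 1 (rh r l) :=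
  contDiff_const.sub (((hpl_contDiff r l).comp contDiff_fst).mul
    ((hpl_contDiff r l).comp contDiff_snd))

lemma rh_out {r l : ℝ} (hl : 0 < l) {x : ℝ × ℝ} (hx : x ∉ Qsq r) : rh r l x = 1 := by
  rw [Qsq, mem_prod, not_and_or] at hx
  rcases hx with h | h <;> simp [rh, hpl_zero hl h]

lemma rh_deriv {K r l : ℝ} (hl : 0 < l)
    (hK : ∀ t, |deriv Real.smoothTransition t| ≤ K) (x : ℝ × ℝ) :
    |fderiv ℝ (rh r l) x (1, 0)| ≤ 2 * K / l ∧ |fderiv ℝ (rh r l) x (0, 1)| ≤ 2 * K / l := by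
  have hd : Differentiable ℝ (hpl r l) := (hpl_contDiff r l).differentiable one_ne_zero
  have b1 := (hd x.1).hasDerivAt.comp_hasFDerivAt x (hasFDerivAt_fst (𝕜 := ℝ) (p := x))
  have b2 := (hd x.2).hasDerivAt.comp_hasFDerivAt x (hasFDerivAt_snd (𝕜 := ℝ) (p := x))
  have e : fderiv ℝ (rh r l) x = _ := ((b1.mul b2).const_sub 1).fderiv
  rw [e]
  have d1 := hpl_deriv (r := r) hl hK x.1
  have d2 := hpl_deriv (r := r) hl hK x.2
  have n1 := hpl_nonneg r l x.1
  have n2 := hpl_nonneg r l x.2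
  have m1 := hpl_le_one r l x.1
  have m2 := hpl_le_one r l x.2
  simp only [Function.comp, _root_.neg_apply, _root_.add_apply,
    _root_.smul_apply, ContinuousLinearMap.coe_fst', ContinuousLinearMap.coe_snd',
    smul_eq_mul, mul_one, mul_zero, add_zero, zero_add, abs_neg, abs_mul, abs_of_nonneg n1,
    abs_of_nonneg n2]
  constructor
  · exact (mul_le_of_le_one_left (abs_nonneg _) m2).trans d1
  · exact (mul_le_of_le_one_left (abs_nonneg _) m1).trans d2

/-- the cut-off function times `u` -/
def cutv (r l : ℝ) (u : ℝ × ℝ → ℂ) (x : ℝ × ℝ) : ℂ := ((1 - rh r l x ^ 4 : ℝ) : ℂ) * u x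

lemma cutv_contDiff (r l : ℝ) {u : ℝ × ℝ → ℂ} (hu : ContDiff ℝ 1 u) :
    ContDiff ℝ 1 (cutv r l u) :=
  (Complex.ofRealCLM.contDiff.comp (contDiff_const.sub ((rh_contDiff r l).pow 4))).mul hu

lemma cutv_fderiv (r l : ℝ) {u : ℝ × ℝ → ℂ} (hu : ContDiff ℝ 1 u) (x e : ℝ × ℝ) :
    fderiv ℝ (cutv r l u) x e = ((1 - rh r l x ^ 4 : ℝ) : ℂ) * fderiv ℝ u x e +
      ((-(4 * rh r l x ^ 3 * fderiv ℝ (rh r l) x e) : ℝ) : ℂ) * u x := by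
  have h1 := ((rh_contDiff r l).differentiable one_ne_zero x).hasFDerivAt
  have h2 := (h1.pow 4).const_sub 1
  have h3 := (Complex.ofRealCLM.hasFDerivAt (x := 1 - rh r l x ^ 4)).comp x h2
  have h4 := (hu.differentiable one_ne_zero x).hasFDerivAt
  have e5 : fderiv ℝ (cutv r l u) x = _ := (h3.mul h4).fderiv
  rw [e5]
  simp
  ring

lemma rh_fderiv_out {r l : ℝ} (hl : 0 < l) {x : ℝ × ℝ} (hx : x ∉ Qsq r) :
    fderiv ℝ (rh r l) x = 0 := by
  have : IsLocalMax (rh r l) x := by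
    refine Eventually.of_forall fun y => ?_
    rw [rh_out hl hx]; exact rh_le_one r l y
  exact this.fderiv_eq_zero

lemma cutv_out {r l : ℝ} (hl : 0 < l) {u : ℝ × ℝ → ℂ} (hu : ContDiff ℝ 1 u) {x : ℝ × ℝ}
    (hx : x ∉ Qsq r) : cutv r l u x = 0 ∧ fderiv ℝ (cutv r l u) x = 0 := by
  constructor
  · simp [cutv, rh_out hl hx]
  · apply ContinuousLinearMap.ext
    intro e
    rw [cutv_fderiv r l hu, rh_out hl hx, rh_fderiv_out hl hx]; simp

lemma magGrad_cutv {K r l : ℝ} (hl : 0 < l)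
    (hK : ∀ t, |deriv Real.smoothTransition t| ≤ K) {u : ℝ × ℝ → ℂ} (hu : ContDiff ℝ 1 u)
    (x : ℝ × ℝ) : magGradSq A₀ (cutv r l u) x ≤
      magGradSq A₀ u x + 64 * (2 * K / l) ^ 2 * rh r l x ^ 2 * ‖u x‖ ^ 2 := by
  have hd := rh_deriv (r := r) hl hK x
  have v1 := vec_ineq (fderiv ℝ u x (1, 0) - Complex.I * ((A₀ x).1 : ℂ) * u x) (u x)
    (rh r l x) _ _ (rh_nonneg r l x) (rh_le_one r l x) hd.1
  have v2 := vec_ineq (fderiv ℝ u x (0, 1) - Complex.I * ((A₀ x).2 : ℂ) * u x) (u x)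
    (rh r l x) _ _ (rh_nonneg r l x) (rh_le_one r l x) hd.2
  have e : ∀ (e : ℝ × ℝ) (a : ℂ), fderiv ℝ (cutv r l u) x e - Complex.I * a * cutv r l u x =
      ((1 - rh r l x ^ 4 : ℝ) : ℂ) * (fderiv ℝ u x e - Complex.I * a * u x) +
      ((-(4 * rh r l x ^ 3 * fderiv ℝ (rh r l) x e) : ℝ) : ℂ) * u x := by
    intro e a
    rw [cutv_fderiv r l hu, cutv]; ring
  unfold magGradSq
  rw [e, e]
  linarith

lemma dens_cutv {K b r : ℝ} (hb : 0 < b)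
    (hK : ∀ t, |deriv Real.smoothTransition t| ≤ K) {u : ℝ × ℝ → ℂ} (hu : ContDiff ℝ 1 u)
    (x : ℝ × ℝ) : densH b (cutv r (√b) u) x ≤ densH b u x + (256 * K ^ 2 + 2) ^ 2 / 2 := by
  have hl : 0 < √b := Real.sqrt_pos.2 hb
  have h := mul_le_mul_of_nonneg_left (magGrad_cutv (r := r) hl hK hu x) hb.le
  have hs : b * (64 * (2 * K / √b) ^ 2 * rh r (√b) x ^ 2 * ‖u x‖ ^ 2) =
      256 * K ^ 2 * rh r (√b) x ^ 2 * ‖u x‖ ^ 2 := by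
    rw [div_pow, Real.sq_sqrt hb.le]; field_simp; ring
  have h2 := scal_ineq (rh r (√b) x) (‖u x‖ ^ 2) (256 * K ^ 2) (rh_nonneg _ _ x) (rh_le_one _ _ x)
    (by positivity)
  have hn : ‖cutv r (√b) u x‖ = (1 - rh r (√b) x ^ 4) * ‖u x‖ := by
    rw [cutv, norm_mul, Complex.norm_real, Real.norm_eq_abs, abs_of_nonneg]
    have := pow_le_one₀ (n := 4) (rh_nonneg r (√b) x) (rh_le_one r (√b) x)
    linarith
  unfold densH
  rw [hn]
  nlinarith

lemma dens_cutv_in {K b r : ℝ} (hb : 0 < b)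
    (hK : ∀ t, |deriv Real.smoothTransition t| ≤ K) {u : ℝ × ℝ → ℂ} (hu : ContDiff ℝ 1 u)
    (x : ℝ × ℝ) (hx : rh r (√b) x = 0) : densH b (cutv r (√b) u) x ≤ densH b u x := by
  have hl : 0 < √b := Real.sqrt_pos.2 hb
  have h := mul_le_mul_of_nonneg_left (magGrad_cutv (r := r) hl hK hu x) hb.le
  rw [hx] at h
  have hn : cutv r (√b) u x = u x := by simp [cutv, hx]
  unfold densH
  rw [hn]
  nlinarith

/-- the four boundary strips -/
def strp (r l : ℝ) (i : Fin 4) : Set (ℝ × ℝ) :=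
  match i with
  | 0 => Ioo (-r/2) (-r/2 + l) ×ˢ Ioo (-r/2) (r/2)
  | 1 => Ioo (r/2 - l) (r/2) ×ˢ Ioo (-r/2) (r/2)
  | 2 => Ioo (-r/2) (r/2) ×ˢ Ioo (-r/2) (-r/2 + l)
  | 3 => Ioo (-r/2) (r/2) ×ˢ Ioo (r/2 - l) (r/2)

lemma strp_meas (r l : ℝ) (i : Fin 4) : MeasurableSet (strp r l i) := by
  fin_cases i <;> exact measurableSet_Ioo.prod measurableSet_Ioo

lemma strp_vol {r l : ℝ} (hr : 0 < r) (hl : 0 < l) (i : Fin 4) :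
    volume.real (strp r l i) = l * r := by
  fin_cases i <;> simp only [strp] <;> rw [vol_rect _ _ _ _ (by linarith) (by linarith)] <;> ring

lemma strp_fin (r l : ℝ) (i : Fin 4) : volume (strp r l i) ≠ ⊤ := by
  have : Bornology.IsBounded (strp r l i) := by
    fin_cases i <;> exact (Metric.isBounded_Ioo _ _).prod (Metric.isBounded_Ioo _ _)
  exact this.measure_lt_top.ne

lemma rh_layer {r l : ℝ} (hl : 0 < l) {x : ℝ × ℝ} (hx : x ∈ Qsq r)
    (h : ∀ i, x ∉ strp r l i) : rh r l x = 0 := by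
  have h0 := h 0
  have h1 := h 1
  have h2 := h 2
  have h3 := h 3
  simp only [strp, Qsq, mem_prod, mem_Ioo] at h0 h1 h2 h3 hx
  obtain ⟨⟨a1, a2⟩, a3, a4⟩ := hx
  have g1 : hpl r l x.1 = 1 := by
    apply hpl_one hl
    · by_contra hh; exact h0 ⟨⟨a1, not_le.1 hh⟩, a3, a4⟩
    · by_contra hh; exact h1 ⟨⟨not_le.1 hh, a2⟩, a3, a4⟩
  have g2 : hpl r l x.2 = 1 := by
    apply hpl_one hl
    · by_contra hh; exact h2 ⟨⟨a1, a2⟩, a3, not_le.1 hh⟩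
    · by_contra hh; exact h3 ⟨⟨a1, a2⟩, not_le.1 hh, a4⟩
  simp [rh, g1, g2]

lemma Fsq_cutv {K b r : ℝ} (hb : 0 < b) (hr : 0 < r)
    (hK : ∀ t, |deriv Real.smoothTransition t| ≤ K) {u : ℝ × ℝ → ℂ} (hu : ContDiff ℝ 1 u) :
    Fsq b r (cutv r (√b) u) ≤ Fsq b r u + 2 * (256 * K ^ 2 + 2) ^ 2 * √b * r := by
  have hl : 0 < √b := Real.sqrt_pos.2 hb
  set M := (256 * K ^ 2 + 2) ^ 2 / 2 with hM
  have hM0 : 0 ≤ M := by positivity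
  have hint : ∀ i ∈ (Finset.univ : Finset (Fin 4)),
      Integrable ((strp r (√b) i).indicator fun _ => M) (volume.restrict (Qsq r)) := by
    intro i _
    exact ((integrable_indicator_iff (strp_meas r _ i)).2
      (integrableOn_const (strp_fin r _ i))).restrict
  have step : ∫ x in Qsq r, densH b (cutv r (√b) u) x ≤
      ∫ x in Qsq r, (densH b u x + ∑ i : Fin 4, (strp r (√b) i).indicator (fun _ => M) x) := by
    apply setIntegral_mono_on (cont_intOn (densH_cont b (cutv_contDiff r _ hu)) r)
      ((cont_intOn (densH_cont b hu) r).add (integrable_finsetSum _ hint)) (Qsq_meas r)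
    intro x hx
    change _ ≤ densH b u x + ∑ i : Fin 4, (strp r (√b) i).indicator (fun _ => M) x
    have hnn : ∀ i ∈ (Finset.univ : Finset (Fin 4)),
        0 ≤ (strp r (√b) i).indicator (fun _ => M) x :=
      fun i _ => indicator_nonneg (fun _ _ => hM0) x
    by_cases h : ∀ i, x ∉ strp r (√b) i
    · have := dens_cutv_in hb hK hu x (rh_layer hl hx h)
      have := Finset.sum_nonneg hnn
      linarith
    · push Not at h
      obtain ⟨i, hi⟩ := h
      have h1 := Finset.single_le_sum hnn (Finset.mem_univ i)
      rw [indicator_of_mem hi] at h1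
      have := dens_cutv (r := r) hb hK hu x
      linarith
  rw [integral_add (cont_intOn (densH_cont b hu) r) (integrable_finsetSum _ hint),
    integral_finsetSum _ hint] at step
  have hi : ∀ i ∈ (Finset.univ : Finset (Fin 4)),
      ∫ x in Qsq r, (strp r (√b) i).indicator (fun _ => M) x ≤ √b * r * M := by
    intro i _
    have h1 : ∫ x in Qsq r, (strp r (√b) i).indicator (fun _ => M) x ≤
        ∫ x, (strp r (√b) i).indicator (fun _ => M) x :=
      setIntegral_le_integral ((integrable_indicator_iff (strp_meas r _ i)).2
        (integrableOn_const (strp_fin r _ i)))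
        (Eventually.of_forall fun x => indicator_nonneg (fun _ _ => hM0) x)
    have h2 : ∫ x, (strp r (√b) i).indicator (fun _ => M) x = √b * r * M := by
      rw [integral_indicator (strp_meas r _ i), setIntegral_const, strp_vol hr hl, smul_eq_mul]
    exact h1.trans h2.le
  have hsum := Finset.sum_le_sum hi
  simp only [Finset.sum_const, Finset.card_univ, Fintype.card_fin, nsmul_eq_mul] at hsum
  change ∫ x in Qsq r, densH b (cutv r (√b) u) x ≤ (∫ x in Qsq r, densH b u x) + _
  push_cast at hsum
  have : 4 * (√b * r * M) = 2 * (256 * K ^ 2 + 2) ^ 2 * √b * r := by rw [hM]; ring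
  linarith

/-- `e_N(b,r)/r² ≥ g(b) - C √b / r` for all `b > 0`, `r ≥ 1`. -/
theorem eN_estimate (g : ℝ → ℝ) (hg : IsLimitG g) :
    ∃ C > (0:ℝ), ∀ b : ℝ, 0 < b → ∀ r : ℝ, 1 ≤ r →
      eN b r / r ^ 2 ≥ g b - C * Real.sqrt b / r := by
  obtain ⟨K, hK0, hK⟩ := ST_bound
  refine ⟨2 * (256 * K ^ 2 + 2) ^ 2, by positivity, fun b hb r hr1 => ?_⟩
  have hr : 0 < r := by linarith
  have key : g b * r ^ 2 - 2 * (256 * K ^ 2 + 2) ^ 2 * √b * r ≤ eN b r := by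
    apply le_csInf
    · exact ⟨_, ⟨fun _ => 0, (contDiff_const : ContDiff ℝ 1 (fun _ : ℝ × ℝ => (0:ℂ))), rfl⟩⟩
    · rintro _ ⟨u, hu, rfl⟩
      have hu' : ContDiff ℝ 1 u := hu
      have hl : 0 < √b := Real.sqrt_pos.2 hb
      have h1 := g_le hg hb hr (cutv_contDiff r (√b) hu') (fun x hx => cutv_out hl hu' hx)
      rw [le_div_iff₀ (by positivity)] at h1
      have h2 := Fsq_cutv hb hr hK hu'
      linarith
  rw [ge_iff_le, le_div_iff₀ (by positivity)]
  refine le_trans (le_of_eq ?_) key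
  field_simp

end
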